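/- Let u be a solution in Q_4 of u_t + div(A(x,t)∇u) + ⟨b(x,t),∇u⟩ + V(x,t)u = 0. Then there exists a constant N > 1, depending only on n, Λ and M, such that for every ρ ∈ (0,1] and every 0 < t ≤ T_{ρ,N}, where T_{ρ,N} = ρ² / (2N·log(2N(1+‖V‖_∞+‖b‖_∞²)²·Θ_ρ) + 5N²(‖V‖_∞^{1/2} + ‖b‖_∞ + 1)) and Θ_ρ = (∫_{Q_3} u² dX)/(ρ² ∫_{B_ρ} u(x,0)² dx), one has N·e^{‖V‖_∞^{1/2} + ‖b‖_∞} ∫_{B_{2ρ}} u(x,t)² dx ≥ ∫_{B_ρ} u(x,0)² dx. -/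

import Mathlib

open MeasureTheory Metric Set Real

noncomputable section

/-- `ℝⁿ` as a Euclidean space. -/
abbrev En (n : ℕ) : Type := EuclideanSpace ℝ (Fin n)

/-- The `i`-th spatial partial derivative of a scalar function. -/
def pder {n : ℕ} (i : Fin n) (f : En n → ℝ) (x : En n) : ℝ :=
  fderiv ℝ f x (EuclideanSpace.single i 1)

/-- The (backward) parabolic operator `L u = u_t + div(A∇u) + ⟨b,∇u⟩ + V u`. -/
def Lop {n : ℕ} (A : En n → ℝ → Matrix (Fin n) (Fin n) ℝ)
    (b : En n → ℝ → En n) (V : En n → ℝ → ℝ) (u : En n → ℝ → ℝ)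
    (x : En n) (t : ℝ) : ℝ :=
  deriv (fun s => u x s) t
    + (∑ i, pder i (fun y => ∑ j, A y t i j * pder j (fun z => u z t) y) x)
    + (∑ i, b x t i * pder i (fun z => u z t) x)
    + V x t * u x t

/-- `A` is symmetric and uniformly elliptic with constant `Λ`:
`Λ⁻¹|ξ|² ≤ ⟨A(x,t)ξ,ξ⟩ ≤ Λ|ξ|²`. -/
def Elliptic {n : ℕ} (A : En n → ℝ → Matrix (Fin n) (Fin n) ℝ) (Λ : ℝ) : Prop :=
  ∀ (x : En n) (t : ℝ), 0 ≤ t → (A x t).IsSymm ∧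
    ∀ ξ : En n,
      Λ⁻¹ * ‖ξ‖ ^ 2 ≤ ∑ i, ∑ j, A x t i j * ξ j * ξ i ∧
        ∑ i, ∑ j, A x t i j * ξ j * ξ i ≤ Λ * ‖ξ‖ ^ 2

/-- `A` is Lipschitz in the parabolic sense with constant `M`:
`|a_{ij}(x,t) − a_{ij}(y,s)| ≤ M(|x−y| + |t−s|^{1/2})`. -/
def ParLipschitz {n : ℕ} (A : En n → ℝ → Matrix (Fin n) (Fin n) ℝ) (M : ℝ) : Prop :=
  ∀ (x y : En n) (s t : ℝ), 0 ≤ s → 0 ≤ t → ∀ i j,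
    |A x t i j - A y s i j| ≤ M * (‖x - y‖ + Real.sqrt |t - s|)

/-- The parabolic cylinder `Q_r = B_r × [0, r²]` as a subset of `ℝⁿ × ℝ`. -/
def Qcyl (n : ℕ) (r : ℝ) : Set (En n × ℝ) := ball (0 : En n) r ×ˢ Icc (0 : ℝ) (r ^ 2)

/-- `c` is a bound for the norm `‖f‖_{1,1/2}` on `Q₄`, i.e. it bounds `f`, its
spatial gradient, and its Hölder-`1/2` quotient in time. -/
def HolBound {n : ℕ} (f : En n → ℝ → ℝ) (c : ℝ) : Prop :=
  (∀ x ∈ ball (0 : En n) 4, ∀ t ∈ Icc (0 : ℝ) 16, |f x t| ≤ c) ∧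
  (∀ x ∈ ball (0 : En n) 4, ∀ t ∈ Icc (0 : ℝ) 16, ‖fderiv ℝ (fun y => f y t) x‖ ≤ c) ∧
  (∀ x ∈ ball (0 : En n) 4, ∀ t ∈ Icc (0 : ℝ) 16, ∀ s ∈ Icc (0 : ℝ) 16,
    |f x t - f x s| ≤ c * Real.sqrt |t - s|)

/-- `c` is a bound for `‖b‖_{1,1/2} = max_i ‖b_i‖_{1,1/2}` on `Q₄`. -/
def HolBoundVec {n : ℕ} (b : En n → ℝ → En n) (c : ℝ) : Prop :=
  ∀ i : Fin n, HolBound (fun x t => b x t i) c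
/-- `c` bounds `‖f‖_{L∞(Q₄)}`. -/
def SupBound {n : ℕ} (f : En n → ℝ → ℝ) (c : ℝ) : Prop :=
  ∀ x ∈ ball (0 : En n) 4, ∀ t ∈ Icc (0 : ℝ) 16, |f x t| ≤ c

/-- `c` bounds `‖b‖_{L∞(Q₄)}`. -/
def SupBoundVec {n : ℕ} (b : En n → ℝ → En n) (c : ℝ) : Prop :=
  ∀ x ∈ ball (0 : En n) 4, ∀ t ∈ Icc (0 : ℝ) 16, ‖b x t‖ ≤ c

/-!
Let `g` be a weight supported in `B_{2ρ}`. Differentiating the weighted energy `∫ (u g)²` in time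
and integrating by parts, the equation gives `d/ds ∫ (u g)² ≥ -c ∫ (u g)²` with
`c = Λ‖b‖² + 2‖V‖`, provided that `g` satisfies the eikonal inequality `∂ₜ(g²) ≥ 4Λ|∇g|²`. The
weight `g = θ exp(-α ψ² / (2 (s + t)))`, with `ψ` a normalized distance to `B_ρ` and `α` a small
multiple of `ρ²`, satisfies it except where the cutoff `θ` varies. There the error is of size
`ρ⁻² exp(-ρ² / (B t))`, so that Grönwall's inequality on `[0, t]` yields
`∫_{B_ρ} u(0)² ≤ exp(c t) (∫_{B_{2ρ}} u(t)² + B ρ⁻² exp(-ρ² / (B t)) ∫_{Q_3} u²)`.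
For `t ≤ T_{ρ,N}` the last term is at most half of the left-hand side and is absorbed, while `c t`
is at most `‖V‖^{1/2} + ‖b‖`. Averaging the same inequality over times up to
`ρ² / (1 + ‖V‖ + ‖b‖²)` bounds `Θ_ρ` from below by a multiple of `1 / (1 + ‖V‖ + ‖b‖²)`; hence the
logarithm in `T_{ρ,N}` is nonnegative and `T_{ρ,N} ≤ 1`.
-/

section LipschitzIntegrationByParts

variable {X : Type*} [PseudoEMetricSpace X] {Ω : Set X} {f g : X → ℝ}

theorem locallyLipschitzOn_mul (hf : LocallyLipschitzOn Ω f) (hg : LocallyLipschitzOn Ω g) :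
    LocallyLipschitzOn Ω fun x => f x * g x := by
  have hmul : LocallyLipschitz fun p : ℝ × ℝ => p.1 * p.2 :=
    (contDiff_fst.mul contDiff_snd : ContDiff ℝ 1 _).locallyLipschitz
  rw [locallyLipschitzOn_iff_restrict] at *
  exact hmul.comp (hf.prodMk hg)

theorem locallyLipschitzOn_sum {ι : Type*} (s : Finset ι) {F : ι → X → ℝ}
    (hF : ∀ i ∈ s, LocallyLipschitzOn Ω (F i)) :
    LocallyLipschitzOn Ω fun x => ∑ i ∈ s, F i x := by
  classical
  induction s using Finset.induction_on with
  | empty => simpa using (LocallyLipschitz.const (0 : ℝ)).locallyLipschitzOn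
  | insert i s his ih =>
    simp only [Finset.sum_insert his]
    exact (hF i (Finset.mem_insert_self i s)).add
      (ih fun j hj => hF j (Finset.mem_insert_of_mem hj))

theorem locallyLipschitz_of_tsupport_subset (hΩ : IsOpen Ω) (hf : LocallyLipschitzOn Ω f)
    (hsupp : tsupport f ⊆ Ω) : LocallyLipschitz f := by
  intro x
  by_cases hx : x ∈ Ω
  · obtain ⟨K, s, hs, hfs⟩ := hf hx
    exact ⟨K, s, nhdsWithin_eq_nhds.2 (hΩ.mem_nhds hx) ▸ hs, hfs⟩
  · have hzero : ∀ y ∈ (tsupport f)ᶜ, f y = 0 := fun y => image_eq_zero_of_notMem_tsupport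
    exact ⟨0, (tsupport f)ᶜ, (isClosed_tsupport f).isOpen_compl.mem_nhds fun h => hx (hsupp h),
      fun y hy z hz => by simp [hzero y hy, hzero z hz]⟩

theorem exists_lipschitzWith_of_hasCompactSupport {X : Type*} [PseudoMetricSpace X]
    [ProperSpace X] {f : X → ℝ} (hf : LocallyLipschitz f) (hc : HasCompactSupport f) :
    ∃ K, LipschitzWith K f := by
  have hL : IsCompact (cthickening 1 (tsupport f)) := IsCompact.cthickening hc
  obtain ⟨K, hK⟩ := (hf.locallyLipschitzOn (s := cthickening 1 (tsupport f))
    ).exists_lipschitzOnWith_of_compact hL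
  obtain ⟨C, hC⟩ := hc.exists_bound_of_continuous hf.continuous
  set D : ℝ := max K C
  have hD : 0 ≤ D := K.2.trans (le_max_left _ _)
  have key : ∀ x y, x ∈ tsupport f → dist (f x) (f y) ≤ D * dist x y := by
    intro x y hx
    by_cases hy : y ∈ cthickening 1 (tsupport f)
    · exact (hK.dist_le_mul x (self_subset_cthickening _ hx) y hy).trans
        (mul_le_mul_of_nonneg_right (le_max_left _ _) dist_nonneg)
    · have hfy : f y = 0 :=
        image_eq_zero_of_notMem_tsupport fun h => hy (self_subset_cthickening _ h)
      have hxy : 1 ≤ dist x y := by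
        by_contra! h
        exact hy (mem_cthickening_of_dist_le y x 1 _ hx (dist_comm x y ▸ h.le))
      calc dist (f x) (f y) = ‖f x‖ := by rw [hfy, dist_zero_right]
        _ ≤ D := (hC x).trans (le_max_right _ _)
        _ ≤ D * dist x y := le_mul_of_one_le_right hD hxy
  refine ⟨D.toNNReal, LipschitzWith.of_dist_le_mul fun x y => ?_⟩
  rw [Real.coe_toNNReal _ hD]
  by_cases hx : x ∈ tsupport f
  · exact key x y hx
  by_cases hy : y ∈ tsupport f
  · rw [dist_comm, dist_comm x]
    exact key y x hy
  · rw [image_eq_zero_of_notMem_tsupport hx, image_eq_zero_of_notMem_tsupport hy, dist_self]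
    exact mul_nonneg hD dist_nonneg

variable {E : Type*} [NormedAddCommGroup E] [NormedSpace ℝ E] {Ω : Set E} {f g : E → ℝ}

theorem locallyLipschitzOn_of_contDiffOn (hΩ : IsOpen Ω) (hf : ContDiffOn ℝ 1 f Ω) :
    LocallyLipschitzOn Ω f := by
  intro x hx
  obtain ⟨K, s, hs, hfs⟩ := (hf.contDiffAt (hΩ.mem_nhds hx)).exists_lipschitzOnWith
  exact ⟨K, s, mem_nhdsWithin_of_mem_nhds hs, hfs⟩

/-- Where `g ≠ 0`, the function `f = (f g) / g` is itself differentiable; where `g = 0`, the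
derivative of `f g` is `f x • g'` by the continuity of `f`. -/
theorem fderiv_mul_of_differentiableAt_mul {x : E} (hf : ContinuousAt f x)
    (hg : DifferentiableAt ℝ g x) (hfg : DifferentiableAt ℝ (fun y => f y * g y) x) :
    fderiv ℝ (fun y => f y * g y) x = f x • fderiv ℝ g x + g x • fderiv ℝ f x := by
  by_cases hgx : g x = 0
  · have hderiv : HasFDerivAt (fun y => f y * g y) (f x • fderiv ℝ g x) x := by
      have hfx : (fun y => f y - f x) =o[nhds x] fun _ => (1 : ℝ) :=
        (Asymptotics.isLittleO_one_iff ℝ).2 (tendsto_sub_nhds_zero_iff.2 hf)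
      have hlin : (fun y => fderiv ℝ g x (y - x)) =O[nhds x] fun y => y - x :=
        (fderiv ℝ g x).isBigO_sub _ x
      refine .of_isLittleO ?_
      have hsum := ((hf.isBigO_one ℝ).mul_isLittleO
        (hasFDerivAt_iff_isLittleO.1 hg.hasFDerivAt).norm_right).add
          (hfx.mul_isBigO hlin.norm_right)
      refine (hsum.congr (fun y => ?_) fun y => one_mul _).of_norm_right
      simp only [hgx, smul_apply, smul_eq_mul]
      ring
    simp [hderiv.fderiv, hgx]
  · have hquot : f =ᶠ[nhds x] fun y => f y * g y * (g y)⁻¹ := by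
      filter_upwards [hg.continuousAt.eventually_ne hgx] with y hy
      rw [mul_inv_cancel_right₀ hy]
    exact fderiv_fun_mul ((hfg.mul (hg.fun_inv hgx)).congr_of_eventuallyEq hquot) hg

variable [MeasurableSpace E] [BorelSpace E] {μ : Measure E}

theorem integrable_fderiv_apply_of_lipschitzWith [IsFiniteMeasureOnCompacts μ] {K : NNReal}
    (hf : LipschitzWith K f) (hc : HasCompactSupport f) (v : E) :
    Integrable (fun x => fderiv ℝ f x v) μ := by
  refine (integrableOn_iff_integrable_of_support_subset (s := tsupport f) fun x hx => ?_).1 ?_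
  · contrapose! hx
    simp [fderiv_of_notMem_tsupport (𝕜 := ℝ) hx]
  · exact Measure.integrableOn_of_bounded (M := K * ‖v‖) hc.measure_ne_top
      (measurable_fderiv_apply_const ℝ f v).aestronglyMeasurable
      (.of_forall fun x => ((fderiv ℝ f x).le_opNorm v).trans
        (mul_le_mul_of_nonneg_right (norm_fderiv_le_of_lipschitz ℝ hf) (norm_nonneg v)))

variable [FiniteDimensional ℝ E] [μ.IsAddHaarMeasure]

theorem integral_fderiv_apply_eq_zero_of_lipschitzWith {K : NNReal} (hf : LipschitzWith K f)
    (hc : HasCompactSupport f) (v : E) : ∫ x, fderiv ℝ f x v ∂μ = 0 := by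
  have hae : (fun x => fderiv ℝ f x v) =ᵐ[μ] fun x => lineDeriv ℝ f x v := by
    filter_upwards [hf.ae_differentiableAt (μ := μ)] with x hx
    rw [hx.lineDeriv_eq_fderiv]
  have hparts :=
    (LipschitzWith.const (α := E) (1 : ℝ)).integral_lineDeriv_mul_eq (μ := μ) hf hc (-v)
  have hone : ∀ x, lineDeriv ℝ (fun _ : E => (1 : ℝ)) x (-v) = 0 := fun x => by simp [lineDeriv]
  simpa [hone, integral_congr_ae hae] using hparts.symm

theorem integral_fderiv_mul_add_mul_fderiv_eq_zero (hΩ : IsOpen Ω) (hf : LocallyLipschitzOn Ω f)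
    (hg : ContDiffOn ℝ 1 g Ω) (hc : HasCompactSupport g) (hsupp : tsupport g ⊆ Ω) (v : E) :
    Integrable (fun x => fderiv ℝ f x v * g x + f x * fderiv ℝ g x v) μ ∧
      ∫ x, (fderiv ℝ f x v * g x + f x * fderiv ℝ g x v) ∂μ = 0 := by
  have hcfg : HasCompactSupport fun x => f x * g x := hc.mul_left
  obtain ⟨K, hK⟩ := exists_lipschitzWith_of_hasCompactSupport
    (locallyLipschitz_of_tsupport_subset hΩ
      (locallyLipschitzOn_mul hf (locallyLipschitzOn_of_contDiffOn hΩ hg))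
      ((tsupport_mul_subset_right (f := f)).trans hsupp)) hcfg
  have hae : (fun x => fderiv ℝ (fun y => f y * g y) x v) =ᵐ[μ]
      fun x => fderiv ℝ f x v * g x + f x * fderiv ℝ g x v := by
    filter_upwards [hK.ae_differentiableAt (μ := μ)] with x hx
    by_cases hxg : x ∈ tsupport g
    · have hxΩ : Ω ∈ nhds x := hΩ.mem_nhds (hsupp hxg)
      rw [fderiv_mul_of_differentiableAt_mul (hf.continuousOn.continuousAt hxΩ)
        ((hg.contDiffAt hxΩ).differentiableAt one_ne_zero) hx]
      simp only [add_apply, smul_apply, smul_eq_mul]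
      ring
    · have hxfg : x ∉ tsupport fun y => f y * g y := fun h =>
        hxg (tsupport_mul_subset_right (f := f) h)
      simp [fderiv_of_notMem_tsupport (𝕜 := ℝ) hxg, fderiv_of_notMem_tsupport (𝕜 := ℝ) hxfg,
        image_eq_zero_of_notMem_tsupport hxg]
  exact ⟨(integrable_fderiv_apply_of_lipschitzWith hK hcfg v).congr hae,
    integral_congr_ae hae ▸ integral_fderiv_apply_eq_zero_of_lipschitzWith hK hcfg v⟩

end LipschitzIntegrationByParts

section PointwiseEnergy

open scoped Gradient Matrix

variable {n : ℕ}

theorem gradient_apply_eq_pder (f : En n → ℝ) (x : En n) (i : Fin n) : ∇ f x i = pder i f x := by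
  rw [pder, ← inner_gradient_left, EuclideanSpace.inner_single_right]
  simp

theorem contDiffOn_pder {m : WithTop ℕ∞} {U : En n → ℝ} {Ω : Set (En n)} (hΩ : IsOpen Ω)
    (hU : ContDiffOn ℝ (m + 1) U Ω) (i : Fin n) : ContDiffOn ℝ m (pder i U) Ω :=
  (hU.fderiv_of_isOpen hΩ le_rfl).clm_apply contDiffOn_const

/-- The components of the conormal flux `a ∇U`, whose divergence is the second-order part of
`Lop`. -/
def flux (a : En n → Matrix (Fin n) (Fin n) ℝ) (U : En n → ℝ) (i : Fin n) (x : En n) : ℝ :=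
  ∑ j, a x i j * pder j U x

theorem locallyLipschitzOn_flux {a : En n → Matrix (Fin n) (Fin n) ℝ} {U : En n → ℝ}
    {Ω : Set (En n)} (hΩ : IsOpen Ω) (ha : ∀ i j, LocallyLipschitzOn Ω fun x => a x i j)
    (hU : ContDiffOn ℝ 2 U Ω) (i : Fin n) : LocallyLipschitzOn Ω (flux a U i) :=
  locallyLipschitzOn_sum _ fun j _ => locallyLipschitzOn_mul (ha i j)
    (locallyLipschitzOn_of_contDiffOn hΩ (contDiffOn_pder hΩ (m := 1) hU j))

theorem integral_div_mul_add_inner_gradient_eq_zero {Ω K : Set (En n)} (hΩ : IsOpen Ω)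
    (hK : IsCompact K) (hKΩ : K ⊆ Ω) {F : Fin n → En n → ℝ} {G : En n → ℝ}
    (hF : ∀ i, LocallyLipschitzOn Ω (F i)) (hG : ContDiffOn ℝ 1 G Ω) (hG0 : ∀ x ∉ K, G x = 0) :
    IntegrableOn (fun x => (∑ i, pder i (F i) x) * G x + ∑ i, F i x * pder i G x) K ∧
      ∫ x in K, ((∑ i, pder i (F i) x) * G x + ∑ i, F i x * pder i G x) = 0 := by
  have hsupp : tsupport G ⊆ K := closure_minimal
    (fun x hx => by_contra fun hxK => hx (hG0 x hxK)) hK.isClosed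
  have hparts i := integral_fderiv_mul_add_mul_fderiv_eq_zero (μ := volume) hΩ (hF i) hG
    (hK.of_isClosed_subset (isClosed_tsupport G) hsupp) (hsupp.trans hKΩ)
    (EuclideanSpace.single i 1)
  have hsum : (fun x => (∑ i, pder i (F i) x) * G x + ∑ i, F i x * pder i G x) =
      fun x => ∑ i, (pder i (F i) x * G x + F i x * pder i G x) := by
    funext x
    rw [Finset.sum_add_distrib, Finset.sum_mul]
  have hzero : ∀ x ∉ K, ∑ i, (pder i (F i) x * G x + F i x * pder i G x) = 0 := fun x hx =>
    Finset.sum_eq_zero fun i _ => by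
      rw [hG0 x hx, pder, pder, fderiv_of_notMem_tsupport (𝕜 := ℝ) fun h => hx (hsupp h)]
      simp
  rw [hsum, setIntegral_eq_integral_of_forall_compl_eq_zero hzero]
  refine ⟨(integrable_finsetSum _ fun i _ => (hparts i).1).integrableOn, ?_⟩
  exact (integral_finsetSum _ fun i _ => (hparts i).1).trans
    (Finset.sum_eq_zero fun i _ => (hparts i).2)

/-- Ellipticity turns the cross term `4 u g ⟨a p, q⟩` into a square: the left-hand side is
`⟨a (g p + 2 u q), g p + 2 u q⟩`. -/
theorem quadratic_form_combination_nonneg {a : Matrix (Fin n) (Fin n) ℝ} (hsymm : a.IsSymm)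
    (hnonneg : ∀ ξ : Fin n → ℝ, 0 ≤ a *ᵥ ξ ⬝ᵥ ξ) (p q : Fin n → ℝ) (u g : ℝ) :
    0 ≤ g ^ 2 * (a *ᵥ p ⬝ᵥ p) + 4 * (u * g) * (a *ᵥ p ⬝ᵥ q) + 4 * u ^ 2 * (a *ᵥ q ⬝ᵥ q) := by
  have hcomm : a *ᵥ q ⬝ᵥ p = a *ᵥ p ⬝ᵥ q := by
    rw [dotProduct_comm, Matrix.dotProduct_mulVec, ← Matrix.mulVec_transpose, hsymm.eq]
  have hsq := hnonneg (g • p + (2 * u) • q)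
  simp only [Matrix.mulVec_add, Matrix.mulVec_smul, add_dotProduct, dotProduct_add,
    smul_dotProduct, dotProduct_smul, smul_eq_mul, hcomm] at hsq
  linarith

theorem two_mul_inner_le_of_norm_le {F : Type*} [NormedAddCommGroup F] [InnerProductSpace ℝ F]
    {Λ c : ℝ} (hΛ : 0 < Λ) (u : ℝ) {β : F} (hβ : ‖β‖ ≤ c) (p : F) :
    2 * u * inner ℝ β p ≤ Λ⁻¹ * ‖p‖ ^ 2 + Λ * c ^ 2 * u ^ 2 := by
  have hinner : u * inner ℝ β p ≤ |u| * (c * ‖p‖) := calc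
    u * inner ℝ β p ≤ |u| * |inner ℝ β p| := (le_abs_self _).trans (abs_mul _ _).le
    _ ≤ |u| * (c * ‖p‖) := by
      gcongr
      exact (abs_real_inner_le_norm β p).trans (by gcongr)
  have hsq : 0 ≤ Λ⁻¹ * (‖p‖ - Λ * c * |u|) ^ 2 := by positivity
  have hexpand : Λ⁻¹ * (‖p‖ - Λ * c * |u|) ^ 2 =
      Λ⁻¹ * ‖p‖ ^ 2 + Λ * c ^ 2 * u ^ 2 - 2 * (|u| * (c * ‖p‖)) := by
    rw [← sq_abs u]
    field_simp
    ring
  linarith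

theorem elliptic_energy_density_le {a : Matrix (Fin n) (Fin n) ℝ} {Λ : ℝ} (hΛ : 0 < Λ)
    (hsymm : a.IsSymm)
    (hlower : ∀ ξ : En n, Λ⁻¹ * ‖ξ‖ ^ 2 ≤ a *ᵥ ξ.ofLp ⬝ᵥ ξ.ofLp)
    (hupper : ∀ ξ : En n, a *ᵥ ξ.ofLp ⬝ᵥ ξ.ofLp ≤ Λ * ‖ξ‖ ^ 2)
    {p q β : En n} {W sV sb u ut g gt divFlux : ℝ} (hW : |W| ≤ sV) (hβ : ‖β‖ ≤ sb)
    (heq : ut + divFlux + inner ℝ β p + W * u = 0) :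
    -(Λ * sb ^ 2 + 2 * sV) * (u * g) ^ 2 + u ^ 2 * (2 * g * gt - 4 * Λ * ‖q‖ ^ 2) ≤
      2 * (u * g) * (ut * g + u * gt) + 2 * (divFlux * (u * g ^ 2) +
        a *ᵥ p.ofLp ⬝ᵥ (g ^ 2 • p + (2 * u * g) • q).ofLp) := by
  have hsquare := quadratic_form_combination_nonneg hsymm
    (fun ξ => le_trans (by positivity) (hlower (WithLp.toLp 2 ξ))) p.ofLp q.ofLp u g
  have hdrift := mul_le_mul_of_nonneg_left (two_mul_inner_le_of_norm_le hΛ u hβ p) (sq_nonneg g)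
  have hpotential : (u * g) ^ 2 * W ≤ (u * g) ^ 2 * sV :=
    mul_le_mul_of_nonneg_left ((le_abs_self W).trans hW) (sq_nonneg _)
  have hp := mul_le_mul_of_nonneg_left (hlower p) (sq_nonneg g)
  have hq := mul_le_mul_of_nonneg_left (hupper q) (sq_nonneg u)
  have hut : ut = -(divFlux + inner ℝ β p + W * u) := by linarith
  simp only [WithLp.ofLp_add, WithLp.ofLp_smul, dotProduct_add, dotProduct_smul, smul_eq_mul]
  rw [hut]
  nlinarith

end PointwiseEnergy

section ParametricIntegral

variable {X : Type*} [TopologicalSpace X] [MeasurableSpace X] [BorelSpace X] [T2Space X]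
  {μ : Measure X} [IsFiniteMeasureOnCompacts μ] {K : Set X} {v v' : X → ℝ → ℝ}

theorem continuousOn_setIntegral_of_isCompact (hK : IsCompact K) {S : Set ℝ} (hS : IsCompact S)
    (hv : ContinuousOn (Function.uncurry v) (K ×ˢ S)) :
    ContinuousOn (fun s => ∫ x in K, v x s ∂μ) S := by
  obtain ⟨C, hC⟩ := (hK.prod hS).exists_bound_of_continuousOn hv
  have hslice : ∀ s ∈ S, ContinuousOn (fun x => v x s) K := fun s hs =>
    hv.comp (f := fun x => (x, s)) (by fun_prop) fun x hx => ⟨hx, hs⟩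
  refine continuousOn_of_dominated (bound := fun _ => C)
    (fun s hs => (hslice s hs).aestronglyMeasurable hK.measurableSet)
    (fun s hs => (ae_restrict_iff' hK.measurableSet).2 (.of_forall fun x hx => hC (x, s) ⟨hx, hs⟩))
    (integrableOn_const hK.measure_ne_top)
    ((ae_restrict_iff' hK.measurableSet).2 (.of_forall fun x hx => ?_))
  exact hv.comp (f := fun s => (x, s)) (by fun_prop) fun s hs => ⟨hx, hs⟩

theorem hasDerivAt_setIntegral_of_isCompact (hK : IsCompact K) {I : Set ℝ} (hI : IsOpen I)
    (hv : ∀ s ∈ I, ContinuousOn (fun x => v x s) K)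
    (hv' : ContinuousOn (Function.uncurry v') (K ×ˢ I))
    (hderiv : ∀ x ∈ K, ∀ s ∈ I, HasDerivAt (v x) (v' x s) s) {s : ℝ} (hs : s ∈ I) :
    HasDerivAt (fun r => ∫ x in K, v x r ∂μ) (∫ x in K, v' x s ∂μ) s := by
  obtain ⟨J, hJ, hJI, hJc⟩ := local_compact_nhds (hI.mem_nhds hs)
  obtain ⟨C, hC⟩ := (hK.prod hJc).exists_bound_of_continuousOn (hv'.mono (prod_mono_right hJI))
  have hslice : ContinuousOn (fun x => v' x s) K :=
    hv'.comp (f := fun x => (x, s)) (by fun_prop) fun x hx => ⟨hx, hs⟩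
  refine (hasDerivAt_integral_of_dominated_loc_of_deriv_le (F := fun r x => v x r)
    (F' := fun r x => v' x r) (bound := fun _ => C) hJ ?_ ((hv s hs).integrableOn_compact hK)
    (hslice.aestronglyMeasurable hK.measurableSet) ?_ (integrableOn_const hK.measure_ne_top) ?_).2
  · filter_upwards [hI.mem_nhds hs] with r hr
    exact (hv r hr).aestronglyMeasurable hK.measurableSet
  · exact (ae_restrict_iff' hK.measurableSet).2
      (.of_forall fun x hx r hr => hC (x, r) ⟨hx, hr⟩)
  · exact (ae_restrict_iff' hK.measurableSet).2
      (.of_forall fun x hx r hr => hderiv x hx r (hJI hr))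

end ParametricIntegral

section PartialDerivative

variable {E : Type*} [NormedAddCommGroup E] [NormedSpace ℝ E] {Ω : Set E} {I : Set ℝ}
  {v : E → ℝ → ℝ}

theorem hasDerivAt_of_contDiffOn_prod (hΩ : IsOpen Ω) (hI : IsOpen I)
    (hv : ContDiffOn ℝ 1 (Function.uncurry v) (Ω ×ˢ I)) {x : E} (hx : x ∈ Ω) {s : ℝ}
    (hs : s ∈ I) : HasDerivAt (v x) (fderiv ℝ (Function.uncurry v) (x, s) (0, 1)) s :=
  ((hv.contDiffAt ((hΩ.prod hI).mem_nhds ⟨hx, hs⟩)).differentiableAt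
    one_ne_zero).hasFDerivAt.comp_hasDerivAt s ((hasDerivAt_const s x).prodMk (hasDerivAt_id s))

theorem continuousOn_deriv_of_contDiffOn_prod (hΩ : IsOpen Ω) (hI : IsOpen I)
    (hv : ContDiffOn ℝ 1 (Function.uncurry v) (Ω ×ˢ I)) :
    ContinuousOn (Function.uncurry fun x s => deriv (v x) s) (Ω ×ˢ I) :=
  ((hv.continuousOn_fderiv_of_isOpen (hΩ.prod hI) le_rfl).clm_apply
    (continuousOn_const (c := ((0 : E), (1 : ℝ))))).congr fun _ hp =>
      (hasDerivAt_of_contDiffOn_prod hΩ hI hv hp.1 hp.2).deriv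

end PartialDerivative

theorem le_exp_mul_add_integral_of_deriv_ge {F F' h : ℝ → ℝ} {c T : ℝ} (hT : 0 ≤ T) (hc : 0 ≤ c)
    (hF : ContinuousOn F (Icc 0 T)) (hF' : ∀ s ∈ Ioo 0 T, HasDerivAt F (F' s) s)
    (hh : ContinuousOn h (Icc 0 T)) (hh0 : ∀ s ∈ Icc 0 T, 0 ≤ h s)
    (hbound : ∀ s ∈ Ioo 0 T, -c * F s - h s ≤ F' s) :
    F 0 ≤ exp (c * T) * (F T + ∫ s in 0..T, h s) := by
  set H : ℝ → ℝ := fun s => ∫ z in 0..s, h z with hH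
  have hH' : ∀ s ∈ Ioo 0 T, HasDerivAt H (h s) s := fun s hs =>
    intervalIntegral.integral_hasDerivAt_right
      ((hh.mono (Icc_subset_Icc_right hs.2.le)).intervalIntegrable_of_Icc hs.1.le)
      ((hh.mono Ioo_subset_Icc_self).stronglyMeasurableAtFilter isOpen_Ioo s hs)
      (hh.continuousAt (Icc_mem_nhds hs.1 hs.2))
  have hHc : ContinuousOn H (Icc 0 T) := by
    have := intervalIntegral.continuousOn_primitive_interval
      (hh.integrableOn_Icc (μ := volume).mono_set (uIcc_of_le hT).le)
    rwa [uIcc_of_le hT] at this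
  have hH0 : ∀ s ∈ Icc 0 T, 0 ≤ H s := fun s hs =>
    intervalIntegral.integral_nonneg hs.1 fun r hr => hh0 r ⟨hr.1, hr.2.trans hs.2⟩
  have hexp : ∀ s, HasDerivAt (fun r => exp (c * r)) (exp (c * s) * c) s := fun s => by
    simpa using ((hasDerivAt_id s).const_mul c).exp
  have hmono : MonotoneOn (fun s => exp (c * s) * (F s + H s)) (Icc 0 T) := by
    refine monotoneOn_of_hasDerivWithinAt_nonneg (convex_Icc 0 T)
      (f' := fun s => exp (c * s) * c * (F s + H s) + exp (c * s) * (F' s + h s))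
      ((by fun_prop : ContinuousOn (fun s => exp (c * s)) _).mul (hF.add hHc)) ?_ ?_ <;>
      rw [interior_Icc]
    · exact fun s hs => ((hexp s).mul ((hF' s hs).add (hH' s hs))).hasDerivWithinAt
    · intro s hs
      have hcH := mul_nonneg hc (hH0 s (Ioo_subset_Icc_self hs))
      rw [mul_assoc, ← mul_add]
      exact mul_nonneg (exp_pos _).le (by linarith [hbound s hs])
  simpa [hH] using hmono (left_mem_Icc.2 hT) (right_mem_Icc.2 hT) hT

section WeightedEnergy

open scoped Gradient Matrix

variable {n : ℕ}

theorem pder_mul_sq {U G : En n → ℝ} {x : En n} (hU : DifferentiableAt ℝ U x)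
    (hG : DifferentiableAt ℝ G x) (i : Fin n) :
    pder i (fun y => U y * G y ^ 2) x = (G x ^ 2 • ∇ U x + (2 * U x * G x) • ∇ G x) i := by
  rw [pder, fderiv_fun_mul hU (hG.fun_pow 2), fderiv_fun_pow 2 hG]
  simp [gradient_apply_eq_pder, pder]
  ring

theorem Elliptic.dotProduct_bounds {A : En n → ℝ → Matrix (Fin n) (Fin n) ℝ} {Λ : ℝ}
    (hA : Elliptic A Λ) (x : En n) {t : ℝ} (ht : 0 ≤ t) (ξ : En n) :
    Λ⁻¹ * ‖ξ‖ ^ 2 ≤ A x t *ᵥ ξ.ofLp ⬝ᵥ ξ.ofLp ∧ A x t *ᵥ ξ.ofLp ⬝ᵥ ξ.ofLp ≤ Λ * ‖ξ‖ ^ 2 := by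
  simpa only [dotProduct, Matrix.mulVec, Finset.sum_mul] using (hA x t ht).2 ξ

/-- Classical solutions `u` of `Lu = 0` on the cylinder `Ω × (0, T)`, continuous up to its bottom
and its top, together with the structural bounds on the coefficients: ellipticity with constant
`Λ`, local Lipschitz continuity of `A` in space, `|V| ≤ sV` and `‖b‖ ≤ sb`. -/
structure IsSolutionOn (A : En n → ℝ → Matrix (Fin n) (Fin n) ℝ) (b : En n → ℝ → En n)
    (V u : En n → ℝ → ℝ) (Ω : Set (En n)) (T Λ sV sb : ℝ) : Prop where
  isOpen : IsOpen Ω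
  elliptic : Elliptic A Λ
  locallyLipschitzOn : ∀ t ∈ Ioo 0 T, ∀ i j, LocallyLipschitzOn Ω fun x => A x t i j
  abs_potential_le : ∀ x ∈ Ω, ∀ t ∈ Ioo 0 T, |V x t| ≤ sV
  norm_drift_le : ∀ x ∈ Ω, ∀ t ∈ Ioo 0 T, ‖b x t‖ ≤ sb
  contDiffOn : ContDiffOn ℝ 2 (Function.uncurry u) (Ω ×ˢ Ioo 0 T)
  continuousOn : ContinuousOn (Function.uncurry u) (Ω ×ˢ Icc 0 T)
  Lop_eq_zero : ∀ x ∈ Ω, ∀ t ∈ Ioo 0 T, Lop A b V u x t = 0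

/-- A weight `g` on `K × [0, T]` for the weighted energy `∫ (u g)²`. The eikonal inequality
`∂ₜ(g²) ≥ 4Λ|∇g|²`, which absorbs the terms that integration by parts puts on `g`, is required up
to an error `R`. -/
structure IsEikonalWeight (g : En n → ℝ → ℝ) (K : Set (En n)) (T Λ R : ℝ) : Prop where
  contDiffOn : ContDiffOn ℝ 1 (Function.uncurry g) (univ ×ˢ Ioo 0 T)
  continuousOn : ContinuousOn (Function.uncurry g) (univ ×ˢ Icc 0 T)
  eq_zero : ∀ x ∉ K, ∀ s, g x s = 0
  eikonal : ∀ x, ∀ s ∈ Ioo 0 T,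
    -R ≤ 2 * g x s * deriv (g x) s - 4 * Λ * ‖∇ (fun y => g y s) x‖ ^ 2

variable {A : En n → ℝ → Matrix (Fin n) (Fin n) ℝ} {b : En n → ℝ → En n} {V u g : En n → ℝ → ℝ}
  {Ω K : Set (En n)} {T Λ sV sb R s : ℝ}

theorem IsSolutionOn.mono {T' : ℝ} (hu : IsSolutionOn A b V u Ω T Λ sV sb) (hT : T' ≤ T) :
    IsSolutionOn A b V u Ω T' Λ sV sb where
  isOpen := hu.isOpen
  elliptic := hu.elliptic
  locallyLipschitzOn t ht := hu.locallyLipschitzOn t (Ioo_subset_Ioo_right hT ht)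
  abs_potential_le x hx t ht := hu.abs_potential_le x hx t (Ioo_subset_Ioo_right hT ht)
  norm_drift_le x hx t ht := hu.norm_drift_le x hx t (Ioo_subset_Ioo_right hT ht)
  contDiffOn := hu.contDiffOn.mono (prod_mono_right (Ioo_subset_Ioo_right hT))
  continuousOn := hu.continuousOn.mono (prod_mono_right (Icc_subset_Icc_right hT))
  Lop_eq_zero x hx t ht := hu.Lop_eq_zero x hx t (Ioo_subset_Ioo_right hT ht)

theorem IsSolutionOn.contDiffOn_slice (hu : IsSolutionOn A b V u Ω T Λ sV sb)
    (hs : s ∈ Ioo 0 T) : ContDiffOn ℝ 2 (fun y => u y s) Ω :=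
  hu.contDiffOn.comp (f := fun y => (y, s)) (by fun_prop) fun _ hy => ⟨hy, hs⟩

theorem IsEikonalWeight.contDiff_slice (hg : IsEikonalWeight g K T Λ R) (hs : s ∈ Ioo 0 T) :
    ContDiff ℝ 1 fun y => g y s :=
  contDiffOn_univ.1 <|
    hg.contDiffOn.comp (f := fun y => (y, s)) (by fun_prop) fun _ _ => ⟨mem_univ _, hs⟩

theorem IsSolutionOn.weighted_energy_density_le (hu : IsSolutionOn A b V u Ω T Λ sV sb)
    (hΛ : 0 < Λ) (hg : IsEikonalWeight g K T Λ R) (hs : s ∈ Ioo 0 T) {x : En n} (hx : x ∈ Ω) :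
    -(Λ * sb ^ 2 + 2 * sV) * (u x s * g x s) ^ 2 - R * u x s ^ 2 ≤
      2 * (u x s * g x s) * (deriv (u x) s * g x s + u x s * deriv (g x) s) +
      2 * ((∑ i, pder i (flux (fun y => A y s) (fun y => u y s) i) x) * (u x s * g x s ^ 2) +
        ∑ i, flux (fun y => A y s) (fun y => u y s) i x *
          pder i (fun y => u y s * g y s ^ 2) x) := by
  have hequation : deriv (u x) s +
      (∑ i, pder i (flux (fun y => A y s) (fun y => u y s) i) x) +
      inner ℝ (b x s) (∇ (fun y => u y s) x) + V x s * u x s = 0 := by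
    rw [← hu.Lop_eq_zero x hx s hs, Lop, PiLp.inner_apply]
    simp only [gradient_apply_eq_pder, RCLike.inner_apply, conj_trivial, mul_comm]
    rfl
  have hdiff : DifferentiableAt ℝ (fun y => u y s) x :=
    ((hu.contDiffOn_slice hs).contDiffAt (hu.isOpen.mem_nhds hx)).differentiableAt two_ne_zero
  have hflux : ∑ i, flux (fun y => A y s) (fun y => u y s) i x *
      pder i (fun y => u y s * g y s ^ 2) x = A x s *ᵥ (∇ (fun y => u y s) x).ofLp ⬝ᵥ
        (g x s ^ 2 • ∇ (fun y => u y s) x + (2 * u x s * g x s) • ∇ (fun y => g y s) x).ofLp := by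
    refine Finset.sum_congr rfl fun i _ => ?_
    rw [pder_mul_sq hdiff ((hg.contDiff_slice hs).differentiable one_ne_zero x)]
    simp only [flux, Matrix.mulVec, dotProduct, gradient_apply_eq_pder]
  have hellip := hu.elliptic.dotProduct_bounds x hs.1.le
  have hdensity := elliptic_energy_density_le hΛ (hu.elliptic x s hs.1.le).1
    (fun ξ => (hellip ξ).1) (fun ξ => (hellip ξ).2) (g := g x s) (gt := deriv (g x) s)
    (q := ∇ (fun y => g y s) x) (hu.abs_potential_le x hx s hs) (hu.norm_drift_le x hx s hs)
    hequation
  rw [hflux]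
  linarith [mul_le_mul_of_nonneg_left (hg.eikonal x s hs) (sq_nonneg (u x s))]

theorem IsSolutionOn.weighted_energy_deriv_ge (hu : IsSolutionOn A b V u Ω T Λ sV sb)
    (hΛ : 0 < Λ) (hK : IsCompact K) (hKΩ : K ⊆ Ω) (hg : IsEikonalWeight g K T Λ R)
    (hs : s ∈ Ioo 0 T) :
    -(Λ * sb ^ 2 + 2 * sV) * (∫ x in K, (u x s * g x s) ^ 2) - R * (∫ x in K, u x s ^ 2) ≤
      ∫ x in K, 2 * (u x s * g x s) * (deriv (u x) s * g x s + u x s * deriv (g x) s) := by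
  have hus := hu.contDiffOn_slice hs
  have hgs := hg.contDiff_slice hs
  have huc : ContinuousOn (fun x => u x s) K := hus.continuousOn.mono hKΩ
  have hgc : ContinuousOn (fun x => g x s) K := hgs.continuous.continuousOn
  have hut : ContinuousOn (fun x => deriv (u x) s) K :=
    (continuousOn_deriv_of_contDiffOn_prod hu.isOpen isOpen_Ioo
      (hu.contDiffOn.of_le one_le_two)).comp (f := fun x => (x, s)) (by fun_prop)
        fun x hx => ⟨hKΩ hx, hs⟩
  have hgt : ContinuousOn (fun x => deriv (g x) s) K :=
    (continuousOn_deriv_of_contDiffOn_prod isOpen_univ isOpen_Ioo hg.contDiffOn).comp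
      (f := fun x => (x, s)) (by fun_prop) fun x _ => ⟨mem_univ x, hs⟩
  obtain ⟨hdiv, hdiv0⟩ := integral_div_mul_add_inner_gradient_eq_zero hu.isOpen hK hKΩ
    (locallyLipschitzOn_flux hu.isOpen (hu.locallyLipschitzOn s hs) hus)
    ((hus.of_le one_le_two).mul (hgs.contDiffOn.pow 2))
    (G := fun x => u x s * g x s ^ 2) fun x hx => by simp [hg.eq_zero x hx]
  have henergy : IntegrableOn (fun x => (u x s * g x s) ^ 2) K :=
    ((huc.mul hgc).pow 2).integrableOn_compact hK
  have hmass : IntegrableOn (fun x => u x s ^ 2) K := (huc.pow 2).integrableOn_compact hK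
  have htime : IntegrableOn (fun x => 2 * (u x s * g x s) *
      (deriv (u x) s * g x s + u x s * deriv (g x) s)) K :=
    ((continuousOn_const.mul (huc.mul hgc)).mul
      ((hut.mul hgc).add (huc.mul hgt))).integrableOn_compact hK
  have hmono := setIntegral_mono_on ((henergy.const_mul (-(Λ * sb ^ 2 + 2 * sV))).sub
    (hmass.const_mul R)) (htime.add (hdiv.const_mul 2)) hK.measurableSet
    fun x hx => hu.weighted_energy_density_le hΛ hg hs (hKΩ hx)
  simp only [Pi.add_apply, Pi.sub_apply] at hmono
  rwa [integral_sub (henergy.const_mul _) (hmass.const_mul _), integral_add htime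
    (hdiv.const_mul 2), integral_const_mul, integral_const_mul, integral_const_mul, hdiv0,
    mul_zero, add_zero] at hmono

theorem IsSolutionOn.hasDerivAt_weighted_energy (hu : IsSolutionOn A b V u Ω T Λ sV sb)
    (hK : IsCompact K) (hKΩ : K ⊆ Ω) (hg : IsEikonalWeight g K T Λ R) (hs : s ∈ Ioo 0 T) :
    HasDerivAt (fun r => ∫ x in K, (u x r * g x r) ^ 2)
      (∫ x in K, 2 * (u x s * g x s) * (deriv (u x) s * g x s + u x s * deriv (g x) s)) s := by
  have hu1 := hu.contDiffOn.of_le one_le_two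
  have hsubu : K ×ˢ Ioo 0 T ⊆ Ω ×ˢ Ioo 0 T := prod_mono_left hKΩ
  have hsubg : K ×ˢ Ioo 0 T ⊆ univ ×ˢ Ioo 0 T := prod_mono_left (subset_univ K)
  have huc := hu1.continuousOn.mono hsubu
  have hgc := hg.contDiffOn.continuousOn.mono hsubg
  have hut := (continuousOn_deriv_of_contDiffOn_prod hu.isOpen isOpen_Ioo hu1).mono hsubu
  have hgt :=
    (continuousOn_deriv_of_contDiffOn_prod isOpen_univ isOpen_Ioo hg.contDiffOn).mono hsubg
  have htime : ContinuousOn (Function.uncurry fun x r => 2 * (u x r * g x r) *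
      (deriv (u x) r * g x r + u x r * deriv (g x) r)) (K ×ˢ Ioo 0 T) :=
    ((continuousOn_const (c := (2 : ℝ))).mul (huc.mul hgc)).mul
      ((hut.mul hgc).add (huc.mul hgt))
  refine hasDerivAt_setIntegral_of_isCompact hK isOpen_Ioo (v := fun x r => (u x r * g x r) ^ 2)
    (fun r hr => ((huc.mul hgc).pow 2).comp (f := fun x => (x, r)) (by fun_prop)
      fun x hx => ⟨hx, hr⟩) htime (fun x hx r hr => ?_) hs
  have hux := (hasDerivAt_of_contDiffOn_prod hu.isOpen isOpen_Ioo hu1 (hKΩ hx)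
    hr).differentiableAt.hasDerivAt
  have hgx := (hasDerivAt_of_contDiffOn_prod isOpen_univ isOpen_Ioo hg.contDiffOn (mem_univ x)
    hr).differentiableAt.hasDerivAt
  simpa using (hux.fun_mul hgx).fun_pow 2

theorem IsSolutionOn.weighted_energy_le (hu : IsSolutionOn A b V u Ω T Λ sV sb) (hΛ : 0 < Λ)
    (hT : 0 ≤ T) (hsV : 0 ≤ sV) (hR : 0 ≤ R) (hK : IsCompact K) (hKΩ : K ⊆ Ω)
    (hg : IsEikonalWeight g K T Λ R) :
    ∫ x in K, (u x 0 * g x 0) ^ 2 ≤ exp ((Λ * sb ^ 2 + 2 * sV) * T) *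
      ((∫ x in K, (u x T * g x T) ^ 2) + R * ∫ s in 0..T, ∫ x in K, u x s ^ 2) := by
  have huc : ContinuousOn (Function.uncurry u) (K ×ˢ Icc 0 T) :=
    hu.continuousOn.mono (prod_mono_left hKΩ)
  have hgc : ContinuousOn (Function.uncurry g) (K ×ˢ Icc 0 T) :=
    hg.continuousOn.mono (prod_mono_left (subset_univ K))
  have henergy : ContinuousOn (Function.uncurry fun x s => (u x s * g x s) ^ 2) (K ×ˢ Icc 0 T) :=
    (huc.mul hgc).pow 2
  have hmass : ContinuousOn (Function.uncurry fun x s => u x s ^ 2) (K ×ˢ Icc 0 T) := huc.pow 2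
  rw [← intervalIntegral.integral_const_mul]
  exact le_exp_mul_add_integral_of_deriv_ge hT (by positivity)
    (continuousOn_setIntegral_of_isCompact hK isCompact_Icc henergy)
    (fun s hs => hu.hasDerivAt_weighted_energy hK hKΩ hg hs)
    (continuousOn_const.mul (continuousOn_setIntegral_of_isCompact hK isCompact_Icc hmass))
    (fun s _ => mul_nonneg hR (integral_nonneg fun x => sq_nonneg _))
    fun s hs => hu.weighted_energy_deriv_ge hΛ hK hKΩ hg hs

end WeightedEnergy

section RadialCutoff

variable {F : Type*} [NormedAddCommGroup F] {r R : ℝ}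

theorem exists_lipschitzWith_smoothTransition : ∃ C, LipschitzWith C Real.smoothTransition := by
  obtain ⟨C, hC⟩ := (Real.smoothTransition.contDiff (n := 1)).contDiffOn.exists_lipschitzOnWith
    one_ne_zero (convex_Icc (0 : ℝ) 1) isCompact_Icc
  refine ⟨C, fun x y => ?_⟩
  have hproj := hC.to_restrict.comp (LipschitzWith.projIcc (zero_le_one' ℝ))
  simpa [Real.smoothTransition.projIcc] using hproj x y

/-- The radial cutoff which is `1` on the ball of radius `r` and `0` outside the ball of radius
`R`. -/
def radialCutoff (r R : ℝ) (x : F) : ℝ :=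
  Real.smoothTransition ((R - ‖x‖) / (R - r))

theorem radialCutoff_nonneg (r R : ℝ) (x : F) : 0 ≤ radialCutoff r R x :=
  Real.smoothTransition.nonneg _

theorem radialCutoff_le_one (r R : ℝ) (x : F) : radialCutoff r R x ≤ 1 :=
  Real.smoothTransition.le_one _

theorem radialCutoff_eq_one (hrR : r < R) {x : F} (hx : ‖x‖ ≤ r) : radialCutoff r R x = 1 :=
  Real.smoothTransition.one_of_one_le <| (one_le_div (sub_pos.2 hrR)).2 (by linarith)

theorem radialCutoff_eq_zero (hrR : r < R) {x : F} (hx : R ≤ ‖x‖) : radialCutoff r R x = 0 :=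
  Real.smoothTransition.zero_of_nonpos <|
    div_nonpos_of_nonpos_of_nonneg (by linarith) (sub_pos.2 hrR).le

theorem lipschitzWith_radialCutoff {C : NNReal} (hC : LipschitzWith C Real.smoothTransition)
    (hrR : r < R) : LipschitzWith (C * (R - r)⁻¹.toNNReal) (radialCutoff r R : F → ℝ) := by
  refine hC.comp (LipschitzWith.of_dist_le_mul fun x y => ?_)
  have hpos : 0 < R - r := sub_pos.2 hrR
  rw [Real.coe_toNNReal _ (inv_pos.2 hpos).le, Real.dist_eq, ← sub_div, abs_div,
    abs_of_pos hpos, div_eq_inv_mul, sub_sub_sub_cancel_left, dist_comm, dist_eq_norm]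
  exact mul_le_mul_of_nonneg_left (abs_norm_sub_norm_le y x) (inv_pos.2 hpos).le

variable [InnerProductSpace ℝ F]

theorem contDiff_radialCutoff {m : ℕ∞} (hr : 0 < r) (hrR : r < R) :
    ContDiff ℝ m (radialCutoff r R : F → ℝ) := by
  rw [contDiff_iff_contDiffAt]
  intro x
  rcases eq_or_ne x 0 with rfl | hx
  · refine (contDiffAt_const (c := (1 : ℝ))).congr_of_eventuallyEq ?_
    filter_upwards [ball_mem_nhds (0 : F) hr] with y hy
    exact radialCutoff_eq_one hrR (mem_ball_zero_iff.1 hy).le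
  · exact Real.smoothTransition.contDiffAt.comp x
      ((contDiffAt_const.sub (contDiffAt_norm ℝ hx)).div_const _)

variable [CompleteSpace F]

theorem norm_gradient_eq_norm_fderiv (f : F → ℝ) (x : F) :
    ‖gradient f x‖ = ‖fderiv ℝ f x‖ :=
  (InnerProductSpace.toDual ℝ F).symm.norm_map _

theorem norm_gradient_radialCutoff_le {C : NNReal} (hC : LipschitzWith C Real.smoothTransition)
    (hrR : r < R) (x : F) : ‖gradient (radialCutoff r R) x‖ ≤ C / (R - r) := by
  rw [norm_gradient_eq_norm_fderiv, div_eq_mul_inv]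
  simpa [Real.coe_toNNReal _ (inv_pos.2 (sub_pos.2 hrR)).le] using
    norm_fderiv_le_of_lipschitz ℝ (lipschitzWith_radialCutoff hC hrR) (x₀ := x)

theorem gradient_radialCutoff_eq_zero (hrR : r < R) {x : F} (hx : ‖x‖ ≤ r) :
    gradient (radialCutoff r R) x = 0 := by
  have hmax : IsLocalMax (radialCutoff r R) x := .of_forall fun y =>
    (radialCutoff_le_one r R y).trans (radialCutoff_eq_one hrR hx).ge
  rw [gradient, hmax.fderiv_eq_zero, map_zero]

end RadialCutoff

section GaussianWeight

open scoped Gradient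

theorem norm_smul_sub_smul_sq_le {F : Type*} [SeminormedAddCommGroup F] [NormedSpace ℝ F]
    (a c : ℝ) (p q : F) : ‖a • p - c • q‖ ^ 2 ≤ 2 * (a ^ 2 * ‖p‖ ^ 2 + c ^ 2 * ‖q‖ ^ 2) := by
  have htriangle : ‖a • p - c • q‖ ^ 2 ≤ (‖a • p‖ + ‖c • q‖) ^ 2 :=
    pow_le_pow_left₀ (norm_nonneg _) (norm_sub_le _ _) 2
  have hsq := add_sq_le (a := ‖a • p‖) (b := ‖c • q‖)
  simp only [norm_smul, mul_pow, norm_eq_abs, sq_abs] at hsq htriangle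
  exact htriangle.trans hsq

/-- The weight `θ exp(-α ψ² / (2 (s + τ)))`: a cutoff `θ` times a Gaussian in the "distance" `ψ`,
centred at the time `-τ`. -/
def gaussianWeight {X : Type*} (θ ψ : X → ℝ) (α τ : ℝ) (x : X) (s : ℝ) : ℝ :=
  θ x * exp (-(α * ψ x ^ 2) / (2 * (s + τ)))

variable {n : ℕ} {θ ψ : En n → ℝ} {α τ s : ℝ} {x : En n}

theorem hasDerivAt_gaussianWeight (hs : s + τ ≠ 0) :
    HasDerivAt (gaussianWeight θ ψ α τ x)
      (gaussianWeight θ ψ α τ x s * (α * (ψ x / (s + τ)) ^ 2 / 2)) s := by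
  have hden : HasDerivAt (fun r => 2 * (r + τ)) 2 s := by
    simpa using ((hasDerivAt_id s).add_const τ).const_mul 2
  refine ((((hasDerivAt_const s (-(α * ψ x ^ 2))).fun_div hden
    (mul_ne_zero two_ne_zero hs)).exp.const_mul (θ x))).congr_deriv ?_
  simp only [gaussianWeight]
  field_simp
  ring

theorem gradient_gaussianWeight (hθ : DifferentiableAt ℝ θ x) (hψ : DifferentiableAt ℝ ψ x) :
    ∇ (fun y => gaussianWeight θ ψ α τ y s) x =
      exp (-(α * ψ x ^ 2) / (2 * (s + τ))) • ∇ θ x -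
        (gaussianWeight θ ψ α τ x s * (α * ψ x / (s + τ))) • ∇ ψ x := by
  have hexp : HasFDerivAt (fun y => exp (-(α * ψ y ^ 2) / (2 * (s + τ)))) _ x :=
    (((hψ.hasFDerivAt.pow 2).const_mul α).neg.mul_const (2 * (s + τ))⁻¹).exp
  refine ext_inner_right ℝ fun v => ?_
  rw [inner_sub_left, real_inner_smul_left, real_inner_smul_left, inner_gradient_left,
    inner_gradient_left, inner_gradient_left]
  simp only [gaussianWeight]
  rw [(hθ.hasFDerivAt.fun_mul hexp).fderiv]
  simp [div_eq_mul_inv]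
  ring

theorem eikonal_gaussianWeight {Λ D : ℝ} (hΛ : 0 ≤ Λ) (hα : 0 ≤ α) (hs : 0 < s + τ)
    (hsτ : s ≤ τ) (hθ : DifferentiableAt ℝ θ x) (hψ : DifferentiableAt ℝ ψ x)
    (hθD : ‖∇ θ x‖ ^ 2 ≤ D) (hψα : 8 * Λ * α * ‖∇ ψ x‖ ^ 2 ≤ 1) (hψ1 : ∇ θ x ≠ 0 → ψ x = 1) :
    -(8 * Λ * D * exp (-α / (2 * τ))) ≤
      2 * gaussianWeight θ ψ α τ x s * deriv (gaussianWeight θ ψ α τ x) s -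
        4 * Λ * ‖∇ (fun y => gaussianWeight θ ψ α τ y s) x‖ ^ 2 := by
  have hgradient := norm_smul_sub_smul_sq_le (exp (-(α * ψ x ^ 2) / (2 * (s + τ))))
    (gaussianWeight θ ψ α τ x s * (α * ψ x / (s + τ))) (∇ θ x) (∇ ψ x)
  rw [← gradient_gaussianWeight hθ hψ] at hgradient
  rw [(hasDerivAt_gaussianWeight hs.ne').deriv]
  set w := gaussianWeight θ ψ α τ x s
  set e := exp (-(α * ψ x ^ 2) / (2 * (s + τ))) with he
  have hD : 0 ≤ D := (sq_nonneg _).trans hθD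
  have hcutoff : e ^ 2 * ‖∇ θ x‖ ^ 2 ≤ exp (-α / (2 * τ)) * D := by
    rcases eq_or_ne (∇ θ x) 0 with h0 | h0
    · rw [h0, norm_zero, zero_pow two_ne_zero, mul_zero]
      positivity
    · refine mul_le_mul ?_ hθD (sq_nonneg _) (exp_pos _).le
      rw [he, ← exp_nat_mul, exp_le_exp, hψ1 h0, one_pow, mul_one, neg_div, neg_div, mul_neg,
        neg_le_neg_iff, Nat.cast_ofNat, mul_div, mul_div_mul_left _ _ (two_ne_zero' ℝ)]
      exact div_le_div_of_nonneg_left hα hs (by linarith)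
  have hgaussian : (w * (α * ψ x / (s + τ))) ^ 2 * (8 * Λ * ‖∇ ψ x‖ ^ 2) ≤
      w ^ 2 * (α * (ψ x / (s + τ)) ^ 2) := calc
    _ = w ^ 2 * (α * (ψ x / (s + τ)) ^ 2) * (8 * Λ * α * ‖∇ ψ x‖ ^ 2) := by ring
    _ ≤ w ^ 2 * (α * (ψ x / (s + τ)) ^ 2) := mul_le_of_le_one_right (by positivity) hψα
  calc -(8 * Λ * D * exp (-α / (2 * τ)))
      ≤ 2 * w * (w * (α * (ψ x / (s + τ)) ^ 2 / 2)) - 4 * Λ * (2 * (e ^ 2 * ‖∇ θ x‖ ^ 2 +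
          (w * (α * ψ x / (s + τ))) ^ 2 * ‖∇ ψ x‖ ^ 2)) := by
        linear_combination 8 * Λ * hcutoff + hgaussian
    _ ≤ _ := by gcongr

theorem isEikonalWeight_gaussianWeight {K : Set (En n)} {Λ D : ℝ} (hΛ : 0 ≤ Λ) (hα : 0 ≤ α)
    (hτ : 0 < τ) (hθ : ContDiff ℝ 1 θ) (hψ : ContDiff ℝ 1 ψ) (hθK : ∀ x ∉ K, θ x = 0)
    (hθD : ∀ x, ‖∇ θ x‖ ^ 2 ≤ D) (hψα : ∀ x, 8 * Λ * α * ‖∇ ψ x‖ ^ 2 ≤ 1)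
    (hψ1 : ∀ x, ∇ θ x ≠ 0 → ψ x = 1) :
    IsEikonalWeight (gaussianWeight θ ψ α τ) K τ Λ (8 * Λ * D * exp (-α / (2 * τ))) where
  contDiffOn := by
    refine (hθ.comp contDiff_fst).contDiffOn.mul (ContDiffOn.exp (ContDiffOn.div
      (by fun_prop) (by fun_prop) fun p hp => ?_))
    have := hp.2.1
    positivity
  continuousOn := by
    have hψc := hψ.continuous
    refine (hθ.continuous.comp continuous_fst).continuousOn.mul (ContinuousOn.rexp
      (ContinuousOn.div (by fun_prop) (by fun_prop) fun p hp => ?_))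
    have := hp.2.1
    positivity
  eq_zero x hx s := by rw [gaussianWeight, hθK x hx, zero_mul]
  eikonal x _ hs := eikonal_gaussianWeight hΛ hα (add_pos hs.1 hτ) hs.2.le
    (hθ.differentiable one_ne_zero x) (hψ.differentiable one_ne_zero x) (hθD x) (hψα x) (hψ1 x)

/-- The Gaussian weight in a smoothed, normalized distance to `B_ρ`, cut off between `B_{3ρ/2}` and
`B_{2ρ}`. The distance is constant where the cutoff varies, so that the Gaussian is as small as
possible on the support of `∇θ`. -/
def radialGaussianWeight (ρ α τ : ℝ) : En n → ℝ → ℝ :=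
  gaussianWeight (radialCutoff (3 * ρ / 2) (2 * ρ)) (fun x => 1 - radialCutoff ρ (3 * ρ / 2) x) α τ

theorem isEikonalWeight_radialGaussianWeight {C : NNReal} {ρ Λ : ℝ}
    (hC : LipschitzWith C Real.smoothTransition) (hρ : 0 < ρ) (hΛ : 0 ≤ Λ) (hα : 0 ≤ α)
    (hαC : 32 * Λ * C ^ 2 * α ≤ ρ ^ 2) (hτ : 0 < τ) :
    IsEikonalWeight (radialGaussianWeight ρ α τ) (closedBall (0 : En n) (2 * ρ)) τ Λ
      (8 * Λ * (2 * C / ρ) ^ 2 * exp (-α / (2 * τ))) := by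
  have hθ (x : En n) : ‖∇ (radialCutoff (3 * ρ / 2) (2 * ρ)) x‖ ≤ 2 * C / ρ :=
    (norm_gradient_radialCutoff_le hC (by linarith) x).trans_eq (by field_simp; ring)
  have hψ (x : En n) : ‖∇ (fun y : En n => 1 - radialCutoff ρ (3 * ρ / 2) y) x‖ ≤ 2 * C / ρ := by
    rw [norm_gradient_eq_norm_fderiv, fderiv_const_sub, norm_neg, ← norm_gradient_eq_norm_fderiv]
    exact (norm_gradient_radialCutoff_le hC (by linarith) x).trans_eq (by field_simp; ring)
  refine isEikonalWeight_gaussianWeight hΛ hα hτ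
    (contDiff_radialCutoff (by linarith) (by linarith))
    (contDiff_const.sub (contDiff_radialCutoff hρ (by linarith))) (fun x hx => ?_)
    (fun x => pow_le_pow_left₀ (norm_nonneg _) (hθ x) 2) (fun x => ?_) fun x hx => ?_
  · exact radialCutoff_eq_zero (by linarith) (not_le.1 (mem_closedBall_zero_iff.not.1 hx)).le
  · calc 8 * Λ * α * ‖∇ (fun y : En n => 1 - radialCutoff ρ (3 * ρ / 2) y) x‖ ^ 2
        ≤ 8 * Λ * α * (2 * C / ρ) ^ 2 := by gcongr; exact hψ x
      _ = 32 * Λ * C ^ 2 * α / ρ ^ 2 := by ring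
      _ ≤ 1 := div_le_one_of_le₀ hαC (sq_nonneg ρ)
  · have hxρ : 3 * ρ / 2 < ‖x‖ := by
      contrapose! hx
      exact gradient_radialCutoff_eq_zero (by linarith) hx
    rw [radialCutoff_eq_zero (by linarith) hxρ.le, sub_zero]

theorem radialGaussianWeight_nonneg (ρ α τ s : ℝ) (x : En n) :
    0 ≤ radialGaussianWeight ρ α τ x s :=
  mul_nonneg (radialCutoff_nonneg _ _ _) (exp_pos _).le

theorem radialGaussianWeight_le_one {ρ : ℝ} (hα : 0 ≤ α) (hs : 0 ≤ s + τ) (x : En n) :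
    radialGaussianWeight ρ α τ x s ≤ 1 := by
  refine mul_le_one₀ (radialCutoff_le_one _ _ _) (exp_pos _).le (exp_le_one_iff.2 ?_)
  exact div_nonpos_of_nonpos_of_nonneg (neg_nonpos.2 (by positivity)) (by positivity)

theorem radialGaussianWeight_eq_one {ρ : ℝ} (hρ : 0 < ρ) (hx : ‖x‖ ≤ ρ) :
    radialGaussianWeight ρ α τ x s = 1 := by
  rw [radialGaussianWeight, gaussianWeight, radialCutoff_eq_one (by linarith) (by linarith),
    radialCutoff_eq_one (by linarith) hx]
  simp

end GaussianWeight

section BallEnergy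

variable {n : ℕ} {A : En n → ℝ → Matrix (Fin n) (Fin n) ℝ} {b : En n → ℝ → En n}
  {V u : En n → ℝ → ℝ} {Ω : Set (En n)} {T Λ sV sb : ℝ}

/-- The `L²` energy `∫_{B_r} u(x, t)² dx`, compared between the times `0` and `t`. -/
def ballEnergy (u : En n → ℝ → ℝ) (r t : ℝ) : ℝ :=
  ∫ x in ball (0 : En n) r, u x t ^ 2

theorem ballEnergy_nonneg (u : En n → ℝ → ℝ) (r t : ℝ) : 0 ≤ ballEnergy u r t :=
  integral_nonneg fun _ => sq_nonneg _

theorem setIntegral_closedBall_eq_ballEnergy {r : ℝ} (hr : r ≠ 0) (u : En n → ℝ → ℝ) (t : ℝ) :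
    ∫ x in closedBall 0 r, u x t ^ 2 = ballEnergy u r t := by
  rw [← ball_union_sphere]
  exact setIntegral_congr_set
    (union_ae_eq_left_of_ae_eq_empty (ae_eq_empty.2 (Measure.addHaar_sphere_of_ne_zero _ 0 hr)))

theorem setIntegral_sq_le_setIntegral_mul_sq {X : Type*} [MeasurableSpace X] {μ : Measure X}
    {s t : Set X} {f w : X → ℝ} (hst : s ⊆ t) (hs : MeasurableSet s) (hw : ∀ x ∈ s, w x = 1)
    (hfw : IntegrableOn (fun x => (f x * w x) ^ 2) t μ) :
    ∫ x in s, f x ^ 2 ∂μ ≤ ∫ x in t, (f x * w x) ^ 2 ∂μ := calc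
  ∫ x in s, f x ^ 2 ∂μ = ∫ x in s, (f x * w x) ^ 2 ∂μ :=
    setIntegral_congr_fun hs fun x hx => by simp only [hw x hx, mul_one]
  _ ≤ ∫ x in t, (f x * w x) ^ 2 ∂μ :=
    setIntegral_mono_set hfw (.of_forall fun _ => sq_nonneg _) hst.eventuallyLE

theorem IsSolutionOn.ballEnergy_le {g : En n → ℝ → ℝ} {r r' R : ℝ}
    (hu : IsSolutionOn A b V u Ω T Λ sV sb) (hΛ : 0 < Λ) (hT : 0 ≤ T) (hsV : 0 ≤ sV) (hR : 0 ≤ R)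
    (hrr' : r ≤ r') (hr' : r' ≠ 0) (hΩ : closedBall 0 r' ⊆ Ω)
    (hg : IsEikonalWeight g (closedBall 0 r') T Λ R) (hg0 : ∀ x ∈ ball 0 r, g x 0 = 1)
    (hgT : ∀ x, |g x T| ≤ 1) :
    ballEnergy u r 0 ≤ exp ((Λ * sb ^ 2 + 2 * sV) * T) *
      (ballEnergy u r' T + R * ∫ s in 0..T, ballEnergy u r' s) := by
  have hcompact : IsCompact (closedBall (0 : En n) r') := isCompact_closedBall 0 r'
  have hslice : ∀ s ∈ Icc 0 T, ContinuousOn (fun x => u x s) (closedBall 0 r') := fun s hs =>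
    hu.continuousOn.comp (f := fun x => (x, s)) (by fun_prop) fun x hx => ⟨hΩ hx, hs⟩
  have hweighted : ∀ s ∈ Icc 0 T,
      IntegrableOn (fun x => (u x s * g x s) ^ 2) (closedBall 0 r') := fun s hs =>
    (((hslice s hs).mul (hg.continuousOn.comp (f := fun x => (x, s)) (by fun_prop)
      fun x _ => ⟨mem_univ x, hs⟩)).pow 2).integrableOn_compact hcompact
  have hbottom : ballEnergy u r 0 ≤ ∫ x in closedBall 0 r', (u x 0 * g x 0) ^ 2 :=
    setIntegral_sq_le_setIntegral_mul_sq
      (ball_subset_closedBall.trans (closedBall_subset_closedBall hrr')) measurableSet_ball hg0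
      (hweighted 0 (left_mem_Icc.2 hT))
  have htop : ∫ x in closedBall 0 r', (u x T * g x T) ^ 2 ≤ ballEnergy u r' T := by
    rw [← setIntegral_closedBall_eq_ballEnergy hr']
    refine setIntegral_mono (hweighted T (right_mem_Icc.2 hT))
      (((hslice T (right_mem_Icc.2 hT)).pow 2).integrableOn_compact hcompact) fun x => ?_
    simp only [mul_pow]
    exact mul_le_of_le_one_right (sq_nonneg _) ((sq_le_one_iff_abs_le_one _).2 (hgT x))
  simp only [← setIntegral_closedBall_eq_ballEnergy hr'] at htop ⊢
  exact hbottom.trans <| (hu.weighted_energy_le hΛ hT hsV hR hcompact hΩ hg).trans <|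
    mul_le_mul_of_nonneg_left (add_le_add_left htop _) (exp_pos _).le

theorem exists_ballEnergy_le_of_isSolutionOn (hΛ : 0 < Λ) :
    ∃ B > 0, ∀ {n : ℕ} {A : En n → ℝ → Matrix (Fin n) (Fin n) ℝ} {b : En n → ℝ → En n}
      {V u : En n → ℝ → ℝ} {Ω : Set (En n)} {T sV sb ρ : ℝ},
      IsSolutionOn A b V u Ω T Λ sV sb → 0 < T → 0 ≤ sV → 0 < ρ → closedBall 0 (2 * ρ) ⊆ Ω →
      ballEnergy u ρ 0 ≤ exp ((Λ * sb ^ 2 + 2 * sV) * T) * (ballEnergy u (2 * ρ) T +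
        B / ρ ^ 2 * exp (-(ρ ^ 2 / (B * T))) * ∫ s in 0..T, ballEnergy u (2 * ρ) s) := by
  obtain ⟨C, hC⟩ := exists_lipschitzWith_smoothTransition
  replace hC : LipschitzWith (C + 1) Real.smoothTransition := hC.weaken le_self_add
  set c : ℝ := 32 * Λ * (C + 1 : NNReal) ^ 2 with hc
  have hc0 : 0 < c := by positivity
  refine ⟨2 * c, by positivity, fun {n A b V u Ω T sV sb ρ} hu hT hsV hρ hΩ => ?_⟩
  have hα : 0 ≤ ρ ^ 2 / c := by positivity
  have hremainder : 8 * Λ * (2 * (C + 1 : NNReal) / ρ) ^ 2 * exp (-(ρ ^ 2 / c) / (2 * T)) ≤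
      2 * c / ρ ^ 2 * exp (-(ρ ^ 2 / (2 * c * T))) := by
    rw [show -(ρ ^ 2 / c) / (2 * T) = -(ρ ^ 2 / (2 * c * T)) by ring,
      show 8 * Λ * (2 * (C + 1 : NNReal) / ρ) ^ 2 = c / ρ ^ 2 by rw [hc]; ring]
    gcongr
    linarith
  have hint : 0 ≤ ∫ s in 0..T, ballEnergy u (2 * ρ) s :=
    intervalIntegral.integral_nonneg hT.le fun s _ => ballEnergy_nonneg u _ s
  refine (hu.ballEnergy_le hΛ hT.le hsV (by positivity) (by linarith) (by positivity) hΩ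
    (isEikonalWeight_radialGaussianWeight hC hρ hΛ.le hα (mul_div_cancel₀ _ hc0.ne').le hT)
    (fun x hx => radialGaussianWeight_eq_one hρ (mem_ball_zero_iff.1 hx).le) fun x => ?_).trans
    (by gcongr)
  rw [abs_of_nonneg (radialGaussianWeight_nonneg _ _ _ _ _)]
  exact radialGaussianWeight_le_one hα (by linarith) x

theorem intervalIntegral_ballEnergy_le {r r' τ : ℝ} (hr : r ≤ r') (hτ : 0 ≤ τ) (hτr : τ ≤ r' ^ 2)
    (hu : ContinuousOn (Function.uncurry u) (closedBall 0 r' ×ˢ Icc 0 (r' ^ 2))) :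
    ∫ s in 0..τ, ballEnergy u r s ≤ ∫ p in Qcyl n r', u p.1 p.2 ^ 2 := by
  have hint : IntegrableOn (fun p : En n × ℝ => u p.1 p.2 ^ 2) (Qcyl n r') :=
    ((hu.pow 2).integrableOn_compact ((isCompact_closedBall _ _).prod isCompact_Icc)).mono_set
      (prod_mono_left ball_subset_closedBall)
  have hsub : ball (0 : En n) r ×ˢ Ioc 0 τ ⊆ Qcyl n r' :=
    prod_mono (ball_subset_ball hr) (Ioc_subset_Icc_self.trans (Icc_subset_Icc_right hτr))
  have hprod := hint.mono_set hsub
  rw [IntegrableOn, Measure.volume_eq_prod, ← Measure.prod_restrict] at hprod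
  calc ∫ s in 0..τ, ballEnergy u r s
      = ∫ p in ball (0 : En n) r ×ˢ Ioc 0 τ, u p.1 p.2 ^ 2 := by
        rw [Measure.volume_eq_prod, ← Measure.prod_restrict, integral_prod_symm _ hprod,
          intervalIntegral.integral_of_le hτ]
        rfl
    _ ≤ ∫ p in Qcyl n r', u p.1 p.2 ^ 2 :=
        setIntegral_mono_set hint (.of_forall fun p => sq_nonneg _) hsub.eventuallyLE

end BallEnergy

theorem sq_mul_le_of_forall_le_exp_mul {H : ℝ → ℝ} {I J B ρ S c k : ℝ} (hρ : 0 < ρ) (hS : 1 ≤ S)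
    (hB : 0 < B) (hJ : 0 ≤ J) (hc : 0 ≤ c) (hck : c * ρ ^ 2 ≤ k * S) (hH0 : ∀ s, 0 ≤ H s)
    (hH : IntervalIntegrable H volume 0 (ρ ^ 2 / S)) (hHJ : ∫ s in 0..ρ ^ 2 / S, H s ≤ J)
    (hI : ∀ s ∈ Ioo 0 (ρ ^ 2 / S),
      I ≤ exp (c * s) * (H s + B / ρ ^ 2 * exp (-(ρ ^ 2 / (B * s))) * J)) :
    ρ ^ 2 * I ≤ S * (exp k * (1 + B) * J) := by
  have hS0 : 0 < S := one_pos.trans_le hS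
  set τ := ρ ^ 2 / S with hτ
  have hτ0 : 0 < τ := by positivity
  have hpointwise : ∀ s ∈ Ioo 0 τ, I ≤ exp k * (H s + B / ρ ^ 2 * J) := fun s hs => by
    have hs0 := hs.1
    have hcs : c * s ≤ k := calc
      c * s ≤ c * τ := mul_le_mul_of_nonneg_left hs.2.le hc
      _ = c * ρ ^ 2 / S := (mul_div_assoc _ _ _).symm
      _ ≤ k := (div_le_iff₀ hS0).2 hck
    have hexp : exp (-(ρ ^ 2 / (B * s))) ≤ 1 := exp_le_one_iff.2 (neg_nonpos.2 (by positivity))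
    have hHs := hH0 s
    refine (hI s hs).trans (mul_le_mul (exp_le_exp.2 hcs) ?_ (by positivity) (exp_pos _).le)
    gcongr
    exact mul_le_of_le_one_right (by positivity) hexp
  have haverage : τ * I ≤ exp k * ((∫ s in 0..τ, H s) + τ * (B / ρ ^ 2 * J)) := by
    have hmono := intervalIntegral.integral_mono_on_of_le_Ioo hτ0.le intervalIntegrable_const
      ((hH.add intervalIntegrable_const).const_mul (exp k)) hpointwise
    rwa [intervalIntegral.integral_const_mul, intervalIntegral.integral_add hH
      intervalIntegrable_const, intervalIntegral.integral_const, intervalIntegral.integral_const,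
      sub_zero, smul_eq_mul, smul_eq_mul] at hmono
  have hremainder : τ * (B / ρ ^ 2 * J) ≤ B * J := by
    rw [show τ * (B / ρ ^ 2 * J) = B * J / S by rw [hτ]; field_simp]
    exact div_le_self (by positivity) hS
  calc ρ ^ 2 * I = S * (τ * I) := by rw [hτ]; field_simp
    _ ≤ S * (exp k * ((∫ s in 0..τ, H s) + τ * (B / ρ ^ 2 * J))) := by gcongr
    _ ≤ S * (exp k * (J + B * J)) := by gcongr
    _ = S * (exp k * (1 + B) * J) := by ring

theorem exponent_le_two_mul_sq {Λ sV sb : ℝ} (hΛ : 1 ≤ Λ) (hsV : 0 ≤ sV) (hsb : 0 ≤ sb) :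
    Λ * sb ^ 2 + 2 * sV ≤ 2 * Λ * (√sV + sb) ^ 2 := by
  have hsq : sV + sb ^ 2 ≤ (√sV + sb) ^ 2 := by
    rw [add_sq, sq_sqrt hsV]
    linarith [mul_nonneg (sqrt_nonneg sV) hsb]
  nlinarith [mul_nonneg (sub_nonneg.2 hΛ) hsV, sq_nonneg sb]

theorem le_two_mul_exp_mul_of_le_exp_mul_add {I H r k m : ℝ} (hI : I ≤ exp k * (H + r))
    (hH : 0 ≤ H) (hr0 : 0 ≤ r) (hkm : k ≤ m) (hr : r ≤ exp (-m) * I / 2) :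
    I ≤ 2 * exp m * H := by
  have habsorb : exp m * r ≤ I / 2 := calc
    exp m * r ≤ exp m * (exp (-m) * I / 2) := by gcongr
    _ = I / 2 := by rw [← mul_div_assoc, ← mul_assoc, ← exp_add, add_neg_cancel, exp_zero, one_mul]
  have hexp : exp k * (H + r) ≤ exp m * (H + r) := by gcongr
  linarith

theorem one_le_mul_div_of_le_mul {N S I J : ℝ} (hS : 1 ≤ S) (hI : 0 < I)
    (hIJ : I ≤ S * (N * J)) : 1 ≤ 2 * N * S ^ 2 * (J / I) := by
  rw [← mul_div_assoc, one_le_div hI]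
  have hSN : 0 ≤ S * (N * J) := hI.le.trans hIJ
  calc I ≤ S * (N * J) := hIJ
    _ ≤ 2 * S * (S * (N * J)) := le_mul_of_one_le_left hSN (by linarith)
    _ = 2 * N * S ^ 2 * J := by ring

theorem remainder_le_exp_neg_mul {N B S I J ρ t m : ℝ} (hρ : 0 < ρ) (hB : 0 < B) (hBN : B ≤ N)
    (hS : 1 ≤ S) (hI : 0 < I) (hJ : 0 < J) (hm : 0 ≤ m) (hN : 1 ≤ N) (ht : 0 < t)
    (hL : 0 ≤ log (2 * N * S ^ 2 * (J / (ρ ^ 2 * I))))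
    (htN : t * (2 * N * log (2 * N * S ^ 2 * (J / (ρ ^ 2 * I))) + 5 * N ^ 2 * (m + 1)) ≤ ρ ^ 2) :
    B / ρ ^ 2 * exp (-(ρ ^ 2 / (B * t))) * J ≤ exp (-m) * I / 2 := by
  set X := 2 * N * S ^ 2 * (J / (ρ ^ 2 * I)) with hX
  have hX0 : 0 < X := by positivity
  have hexponent : log X + m ≤ ρ ^ 2 / (B * t) := by
    rw [le_div_iff₀ (by positivity)]
    calc (log X + m) * (B * t) ≤ (2 * log X + 5 * N * (m + 1)) * (N * t) := by
          gcongr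
          · linarith
          · nlinarith
      _ = t * (2 * N * log X + 5 * N ^ 2 * (m + 1)) := by ring
      _ ≤ ρ ^ 2 := htN
  calc B / ρ ^ 2 * exp (-(ρ ^ 2 / (B * t))) * J
      ≤ B / ρ ^ 2 * exp (-(log X + m)) * J := by gcongr
    _ = B / (N * S ^ 2) * (exp (-m) * I / 2) := by
      rw [neg_add, exp_add, exp_neg (log X), exp_log hX0, hX]
      field_simp
    _ ≤ exp (-m) * I / 2 := mul_le_of_le_one_left (by positivity) <|
      div_le_one_of_le₀ (hBN.trans (le_mul_of_one_le_right (by positivity) (one_le_pow₀ hS)))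
        (by positivity)

theorem exponent_mul_le {N Λ sV sb t : ℝ} (hΛ : 1 ≤ Λ) (hΛN : Λ ≤ N) (hsV : 0 ≤ sV)
    (hsb : 0 ≤ sb) (ht : 0 ≤ t) (htN : t * (5 * N ^ 2 * (√sV + sb + 1)) ≤ 1) :
    (Λ * sb ^ 2 + 2 * sV) * t ≤ √sV + sb := by
  have hm : 0 ≤ √sV + sb := by positivity
  have hΛN2 : 2 * Λ ≤ 5 * N ^ 2 := by nlinarith
  calc (Λ * sb ^ 2 + 2 * sV) * t ≤ 2 * Λ * (√sV + sb) ^ 2 * t := by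
        gcongr
        exact exponent_le_two_mul_sq hΛ hsV hsb
    _ = t * (2 * Λ * (√sV + sb)) * (√sV + sb) := by ring
    _ ≤ t * (5 * N ^ 2 * (√sV + sb + 1)) * (√sV + sb) := by
        have hm1 : √sV + sb ≤ √sV + sb + 1 := (lt_add_one _).le
        gcongr
    _ ≤ √sV + sb := mul_le_of_le_one_left hm htN

theorem le_mul_exp_mul_of_le_time_threshold {N B Λ sV sb ρ t I J H : ℝ} (hΛ : 1 ≤ Λ)
    (hΛN : Λ ≤ N) (hB : 0 < B) (hBN : B ≤ N) (hN : 2 ≤ N) (hsV : 0 ≤ sV) (hsb : 0 ≤ sb)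
    (hρ : 0 < ρ) (hρ1 : ρ ≤ 1) (hI : 0 < I) (hH : 0 ≤ H) (ht : 0 < t)
    (hIJ : ρ ^ 2 * I ≤ (1 + sV + sb ^ 2) * (N * J))
    (htN : t ≤ ρ ^ 2 / (2 * N * log (2 * N * (1 + sV + sb ^ 2) ^ 2 * (J / (ρ ^ 2 * I))) +
      5 * N ^ 2 * (√sV + sb + 1)))
    (hdecay : t ≤ 1 → I ≤ exp ((Λ * sb ^ 2 + 2 * sV) * t) *
      (H + B / ρ ^ 2 * exp (-(ρ ^ 2 / (B * t))) * J)) :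
    I ≤ N * exp (√sV + sb) * H := by
  have hS : 1 ≤ 1 + sV + sb ^ 2 := by linarith [sq_nonneg sb]
  have hm : 0 ≤ √sV + sb := by positivity
  have hJ : 0 < J := by
    have hSNJ : 0 < (1 + sV + sb ^ 2) * (N * J) := (by positivity : 0 < ρ ^ 2 * I).trans_le hIJ
    exact pos_of_mul_pos_right (pos_of_mul_pos_right hSNJ (by positivity)) (by positivity)
  have hL := log_nonneg (one_le_mul_div_of_le_mul hS (by positivity) hIJ)
  set L := log (2 * N * (1 + sV + sb ^ 2) ^ 2 * (J / (ρ ^ 2 * I)))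
  have hNL : 0 ≤ 2 * N * L := by positivity
  have hN5 : 1 ≤ 5 * N ^ 2 * (√sV + sb + 1) :=
    one_le_mul_of_one_le_of_one_le (by nlinarith) (by linarith)
  rw [le_div_iff₀ (by positivity)] at htN
  have hρ2 : ρ ^ 2 ≤ 1 := pow_le_one₀ hρ.le hρ1
  have htN5 : t * (5 * N ^ 2 * (√sV + sb + 1)) ≤ 1 :=
    (mul_le_mul_of_nonneg_left (le_add_of_nonneg_left hNL) ht.le).trans (htN.trans hρ2)
  have ht1 : t ≤ 1 := (le_mul_of_one_le_right ht.le hN5).trans htN5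
  calc I ≤ 2 * exp (√sV + sb) * H :=
        le_two_mul_exp_mul_of_le_exp_mul_add (hdecay ht1) hH (by positivity)
          (exponent_mul_le hΛ hΛN hsV hsb ht.le htN5)
          (remainder_le_exp_neg_mul hρ hB hBN hS hI hJ hm (by linarith) ht hL htN)
    _ ≤ N * exp (√sV + sb) * H := by gcongr


section TimeThreshold

variable {n : ℕ} {A : En n → ℝ → Matrix (Fin n) (Fin n) ℝ} {b : En n → ℝ → En n}
  {V u : En n → ℝ → ℝ} {M Λ sV sb ρ : ℝ}

theorem ParLipschitz.lipschitzWith (hA : ParLipschitz A M) {t : ℝ} (ht : 0 ≤ t) (i j : Fin n) :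
    LipschitzWith M.toNNReal fun x => A x t i j :=
  LipschitzWith.of_dist_le_mul fun x y => by
    have hxy := hA x y t t ht ht i j
    rw [sub_self, abs_zero, sqrt_zero, add_zero, ← dist_eq_norm] at hxy
    exact hxy.trans (mul_le_mul_of_nonneg_right (le_coe_toNNReal M) dist_nonneg)

theorem isSolutionOn_of_contDiffOn_Qcyl (hA : Elliptic A Λ) (hAM : ParLipschitz A M)
    (hV : SupBound V sV) (hb : SupBoundVec b sb)
    (hu : ContDiffOn ℝ 2 (Function.uncurry u) (Qcyl n 4))
    (hLu : ∀ x ∈ ball (0 : En n) 4, ∀ t ∈ Ioo (0 : ℝ) 16, Lop A b V u x t = 0) :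
    IsSolutionOn A b V u (ball 0 4) 16 Λ sV sb := by
  have hQ : Qcyl n 4 = ball 0 4 ×ˢ Icc 0 16 := by norm_num [Qcyl]
  rw [hQ] at hu
  exact
    { isOpen := isOpen_ball
      elliptic := hA
      locallyLipschitzOn := fun t ht i j =>
        (hAM.lipschitzWith ht.1.le i j).locallyLipschitz.locallyLipschitzOn
      abs_potential_le := fun x hx t ht => hV x hx t (Ioo_subset_Icc_self ht)
      norm_drift_le := fun x hx t ht => hb x hx t (Ioo_subset_Icc_self ht)
      contDiffOn := hu.mono (prod_mono_right Ioo_subset_Icc_self)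
      continuousOn := hu.continuousOn
      Lop_eq_zero := hLu }

theorem IsSolutionOn.continuousOn_ballEnergy {Ω : Set (En n)} {T r : ℝ}
    (hu : IsSolutionOn A b V u Ω T Λ sV sb) (hr : r ≠ 0) (hΩ : closedBall 0 r ⊆ Ω) :
    ContinuousOn (ballEnergy u r) (Icc 0 T) :=
  (continuousOn_setIntegral_of_isCompact (isCompact_closedBall 0 r) isCompact_Icc
    ((hu.continuousOn.mono (prod_mono_left hΩ)).pow 2)).congr
      fun t _ => (setIntegral_closedBall_eq_ballEnergy hr u t).symm

theorem IsSolutionOn.intervalIntegral_ballEnergy_le_setIntegral_Qcyl {τ : ℝ}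
    (hu : IsSolutionOn A b V u (ball 0 4) 16 Λ sV sb) (hρ1 : ρ ≤ 1) (hτ : τ ∈ Icc 0 9) :
    ∫ s in 0..τ, ballEnergy u (2 * ρ) s ≤ ∫ p in Qcyl n 3, u p.1 p.2 ^ 2 :=
  intervalIntegral_ballEnergy_le (by linarith) hτ.1 (hτ.2.trans (by norm_num)) <|
    hu.continuousOn.mono <|
      prod_mono (closedBall_subset_ball (by norm_num)) (Icc_subset_Icc_right (by norm_num))

theorem sq_mul_ballEnergy_le {B : ℝ} (hu : IsSolutionOn A b V u (ball 0 4) 16 Λ sV sb)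
    (hΛ : 1 ≤ Λ) (hB : 0 < B) (hsV : 0 ≤ sV) (hρ : 0 < ρ) (hρ1 : ρ ≤ 1)
    (hdecay : ∀ s ∈ Ioc 0 9, ballEnergy u ρ 0 ≤ exp ((Λ * sb ^ 2 + 2 * sV) * s) *
      (ballEnergy u (2 * ρ) s +
        B / ρ ^ 2 * exp (-(ρ ^ 2 / (B * s))) * ∫ p in Qcyl n 3, u p.1 p.2 ^ 2)) :
    ρ ^ 2 * ballEnergy u ρ 0 ≤
      (1 + sV + sb ^ 2) * (exp (2 * Λ) * (1 + B) * ∫ p in Qcyl n 3, u p.1 p.2 ^ 2) := by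
  have hS : 1 ≤ 1 + sV + sb ^ 2 := by linarith [sq_nonneg sb]
  have hρ2 : ρ ^ 2 ≤ 1 := pow_le_one₀ hρ.le hρ1
  have hτ0 : 0 ≤ ρ ^ 2 / (1 + sV + sb ^ 2) := by positivity
  have hτ1 : ρ ^ 2 / (1 + sV + sb ^ 2) ≤ 1 := (div_le_self (sq_nonneg ρ) hS).trans hρ2
  have hc : (Λ * sb ^ 2 + 2 * sV) * ρ ^ 2 ≤ 2 * Λ * (1 + sV + sb ^ 2) := calc
    (Λ * sb ^ 2 + 2 * sV) * ρ ^ 2 ≤ Λ * sb ^ 2 + 2 * sV :=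
      mul_le_of_le_one_right (by positivity) hρ2
    _ ≤ 2 * Λ * (1 + sV + sb ^ 2) := by nlinarith [mul_nonneg (sub_nonneg.2 hΛ) hsV, sq_nonneg sb]
  refine sq_mul_le_of_forall_le_exp_mul hρ hS hB (integral_nonneg fun p => sq_nonneg _)
    (by positivity) hc (ballEnergy_nonneg u (2 * ρ)) ?_
    (hu.intervalIntegral_ballEnergy_le_setIntegral_Qcyl hρ1 ⟨hτ0, by linarith⟩)
    fun s hs => hdecay s ⟨hs.1, by linarith [hs.2]⟩
  refine ContinuousOn.intervalIntegrable_of_Icc hτ0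
    ((hu.continuousOn_ballEnergy (by positivity) ?_).mono (Icc_subset_Icc_right (by linarith)))
  exact closedBall_subset_ball (by linarith)

theorem exists_ballEnergy_le_Qcyl (hΛ : 0 < Λ) :
    ∃ B > 0, ∀ {n : ℕ} {A : En n → ℝ → Matrix (Fin n) (Fin n) ℝ} {b : En n → ℝ → En n}
      {V u : En n → ℝ → ℝ} {sV sb ρ s : ℝ},
      IsSolutionOn A b V u (ball 0 4) 16 Λ sV sb → 0 ≤ sV → 0 < ρ → ρ ≤ 1 → s ∈ Ioc 0 9 →
      ballEnergy u ρ 0 ≤ exp ((Λ * sb ^ 2 + 2 * sV) * s) * (ballEnergy u (2 * ρ) s +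
        B / ρ ^ 2 * exp (-(ρ ^ 2 / (B * s))) * ∫ p in Qcyl n 3, u p.1 p.2 ^ 2) := by
  obtain ⟨B, hB, hdecay⟩ := exists_ballEnergy_le_of_isSolutionOn hΛ
  refine ⟨B, hB, fun {n A b V u sV sb ρ s} hu hsV hρ hρ1 hs => ?_⟩
  refine (hdecay (hu.mono (by linarith [hs.2])) hs.1 hsV hρ
    (closedBall_subset_ball (by linarith))).trans ?_
  gcongr
  exact hu.intervalIntegral_ballEnergy_le_setIntegral_Qcyl hρ1 (Ioc_subset_Icc_self hs)

end TimeThreshold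

theorem monotonicity_in_time_general (Λ : ℝ) (hΛ : 1 ≤ Λ) :
    ∃ N : ℝ, 1 < N ∧ ∀ {n : ℕ} {A : En n → ℝ → Matrix (Fin n) (Fin n) ℝ} {b : En n → ℝ → En n}
      {V u : En n → ℝ → ℝ} {sV sb : ℝ}, IsSolutionOn A b V u (ball 0 4) 16 Λ sV sb →
      ∀ ρ, 0 < ρ → ρ ≤ 1 → ∀ t, 0 < t →
        t ≤ ρ ^ 2 / (2 * N * log (2 * N * (1 + sV + sb ^ 2) ^ 2 *
          ((∫ p in Qcyl n 3, u p.1 p.2 ^ 2) / (ρ ^ 2 * ∫ x in ball (0 : En n) ρ, u x 0 ^ 2))) +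
          5 * N ^ 2 * (√sV + sb + 1)) →
        (∫ x in ball (0 : En n) ρ, u x 0 ^ 2) ≤
          N * exp (√sV + sb) * ∫ x in ball (0 : En n) (2 * ρ), u x t ^ 2 := by
  obtain ⟨B, hB, hdecay⟩ := exists_ballEnergy_le_Qcyl (zero_lt_one.trans_le hΛ)
  have hΛexp : 2 * Λ + 1 ≤ exp (2 * Λ) := add_one_le_exp _
  have hN : exp (2 * Λ) + B ≤ exp (2 * Λ) * (1 + B) := by nlinarith
  refine ⟨exp (2 * Λ) * (1 + B), by linarith, fun {n A b V u sV sb} hu ρ hρ hρ1 t ht htN => ?_⟩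
  have hmem : (0 : En n) ∈ ball 0 4 := mem_ball_self (by norm_num)
  have hsV : 0 ≤ sV := (abs_nonneg _).trans (hu.abs_potential_le 0 hmem 1 (by norm_num))
  have hsb : 0 ≤ sb := (norm_nonneg _).trans (hu.norm_drift_le 0 hmem 1 (by norm_num))
  rcases (ballEnergy_nonneg u ρ 0).eq_or_lt' with hI | hI
  · exact hI.trans_le (mul_nonneg (by positivity) (ballEnergy_nonneg u _ t))
  · exact le_mul_exp_mul_of_le_time_threshold hΛ (by linarith) hB (by linarith) (by linarith) hsV
      hsb hρ hρ1 hI (ballEnergy_nonneg u (2 * ρ) t) ht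
      (sq_mul_ballEnergy_le hu hΛ hB hsV hρ hρ1 fun s => hdecay hu hsV hρ hρ1) htN
      fun ht1 => hdecay hu hsV hρ hρ1 ⟨ht, by linarith⟩

/-- Lemma `mon` of the paper, monotonicity in time: if `u` solves
`u_t + div(A∇u) + ⟨b,∇u⟩ + Vu = 0` in `Q₄`, there is `N > 1`, depending only on
`n, Λ, M`, such that for every `ρ ∈ (0,1]` and every
`0 < t ≤ T_{ρ,N} = ρ²/(2N log(2N(1+‖V‖_∞+‖b‖_∞²)²Θ_ρ) + 5N²(‖V‖_∞^{1/2}+‖b‖_∞+1))`,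
where `Θ_ρ = (∫_{Q₃}u²)/(ρ²∫_{B_ρ}u(·,0)²)`, one has
`N e^{‖V‖_∞^{1/2}+‖b‖_∞} ∫_{B_{2ρ}} u(·,t)² ≥ ∫_{B_ρ} u(·,0)²`.
Here `sV, sb` bound the sup norms of `V` and `b` on `Q₄`. -/
theorem monotonicity_in_time (n : ℕ) (Λ M : ℝ) (hΛ : 1 ≤ Λ) (hM : 0 ≤ M) :
    ∃ N : ℝ, 1 < N ∧
      ∀ (A : En n → ℝ → Matrix (Fin n) (Fin n) ℝ) (b : En n → ℝ → En n)
        (V : En n → ℝ → ℝ) (u : En n → ℝ → ℝ) (sV sb : ℝ),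
        Elliptic A Λ → ParLipschitz A M →
        SupBound V sV → SupBoundVec b sb →
        ContDiffOn ℝ 2 (Function.uncurry u) (Qcyl n 4) →
        (∀ x ∈ ball (0 : En n) 4, ∀ t ∈ Ioo (0 : ℝ) 16, Lop A b V u x t = 0) →
        ∀ ρ : ℝ, 0 < ρ → ρ ≤ 1 →
          ∀ t : ℝ, 0 < t →
            t ≤ ρ ^ 2 / (2 * N * Real.log (2 * N * (1 + sV + sb ^ 2) ^ 2 *
                    ((∫ p in Qcyl n 3, u p.1 p.2 ^ 2) /
                      (ρ ^ 2 * ∫ x in ball (0 : En n) ρ, u x 0 ^ 2)))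
                  + 5 * N ^ 2 * (Real.sqrt sV + sb + 1)) →
            (∫ x in ball (0 : En n) ρ, u x 0 ^ 2) ≤
              N * Real.exp (Real.sqrt sV + sb) *
                ∫ x in ball (0 : En n) (2 * ρ), u x t ^ 2 := by
  obtain ⟨N, hN, hmono⟩ := monotonicity_in_time_general Λ hΛ
  exact ⟨N, hN, fun A b V u sV sb hA hAM hV hb hu hLu =>
    hmono (isSolutionOn_of_contDiffOn_Qcyl hA hAM hV hb hu hLu)⟩
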